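/- Let G and H be connected graphs of order at least two, with G of order n₁. If G⊙H is not isomorphic to K_{n₁}⊙P₂ and not isomorphic to K_{n₁}⊙P₃, then dim(G⊙H) ≥ (n₁/(n₁-1))·pd(G). -/

import Mathlib

/-!
Let `S` be a resolving set of `G ⊙ H`. A vertex outside a copy of `H` is equidistant from all
vertices of that copy, so the part of `S` inside the copy separates its vertices on its own; inside
the copy the distance of `G ⊙ H` is that of `H` truncated at `2`. Hence `S` meets every copy, and it
meets every copy at least twice unless `H` is `P₂` or `P₃`: a single vertex `c` can only separate
`c`, one neighbour and one further vertex.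

If `G` is not complete, it has an induced path `u, v, w`, and merging `u` with `v` in the partition
into singletons leaves a resolving partition, so `pd(G) ≤ n₁ - 1` while `dim(G ⊙ H) ≥ n₁`. If `G` is
complete, `H` is neither `P₂` nor `P₃`, so `pd(G) ≤ n₁` while `dim(G ⊙ H) ≥ 2 n₁`, which is enough
because `n₁ / (n₁ - 1) ≤ 2`.
-/

open SimpleGraph

/-- The corona product `G ⊙ H`: one copy of `G`, one copy of `H` for each vertex of `G`,
with the `i`-th vertex of `G` joined to every vertex of the `i`-th copy of `H`. -/
def corona {α β : Type*} (G : SimpleGraph α) (H : SimpleGraph β) :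
    SimpleGraph (α ⊕ α × β) :=
  SimpleGraph.fromRel (fun x y =>
    match x, y with
    | Sum.inl a, Sum.inl b => G.Adj a b
    | Sum.inl a, Sum.inr iu => a = iu.1
    | Sum.inr iu, Sum.inr jw => iu.1 = jw.1 ∧ H.Adj iu.2 jw.2
    | _, _ => False)

/-- The distance from a vertex to a set of vertices: `d(v,A) = min_{u ∈ A} d(v,u)`. -/
noncomputable def setDist {α : Type*} (G : SimpleGraph α) (v : α) (A : Set α) : ℕ :=
  sInf (G.dist v '' A)

/-- `S` is a resolving set for `G`: distinct vertices have distinct metric representations. -/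
def IsResolvingSet {α : Type*} (G : SimpleGraph α) (S : Set α) : Prop :=
  ∀ u v : α, (∀ w ∈ S, G.dist u w = G.dist v w) → u = v

/-- The metric dimension of `G`: minimum cardinality of a resolving set. -/
noncomputable def metricDim {α : Type*} (G : SimpleGraph α) : ℕ :=
  sInf {k | ∃ S : Set α, IsResolvingSet G S ∧ S.ncard = k}

/-- A family of sets is a resolving partition for `G` if it is a partition of the vertex set
into nonempty cells and distinct vertices have distinct partition representations. -/
def IsResolvingPartition {α : Type*} (G : SimpleGraph α) (P : Set (Set α)) : Prop :=
  (∀ A ∈ P, A.Nonempty) ∧ (∀ v : α, ∃! A : Set α, A ∈ P ∧ v ∈ A) ∧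
    ∀ u v : α, (∀ A ∈ P, setDist G u A = setDist G v A) → u = v

/-- The partition dimension of `G`: minimum number of cells in a resolving partition. -/
noncomputable def partitionDim {α : Type*} (G : SimpleGraph α) : ℕ :=
  sInf {t | ∃ P : Set (Set α), IsResolvingPartition G P ∧ P.ncard = t}

/-- `c(H)`: the maximum cardinality of a connected component of `H` which is isomorphic to a
complete graph (i.e. whose vertex set is a clique). -/
noncomputable def maxCompleteComp {β : Type*} (H : SimpleGraph β) : ℕ :=
  sSup {k | ∃ C : H.ConnectedComponent, H.IsClique C.supp ∧ C.supp.ncard = k}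

/-- `β(H)`: the number of isolated vertices of `H`. -/
noncomputable def numIsolated {β : Type*} (H : SimpleGraph β) : ℕ :=
  Set.ncard {v : β | ∀ u, ¬ H.Adj v u}

/-- `α(H)`: the number of connected components of `H` of order greater than one. -/
noncomputable def numBigComp {β : Type*} (H : SimpleGraph β) : ℕ :=
  Set.ncard {C : H.ConnectedComponent | 1 < C.supp.ncard}

section Corona

variable {V W : Type*} {G : SimpleGraph V} {H : SimpleGraph W}

@[simp]
lemma corona_adj_inl_inl {u v : V} :
    (corona G H).Adj (Sum.inl u) (Sum.inl v) ↔ G.Adj u v := by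
  simpa [corona, G.adj_comm v u] using Adj.ne

@[simp]
lemma corona_adj_inl_inr {u i : V} {a : W} :
    (corona G H).Adj (Sum.inl u) (Sum.inr (i, a)) ↔ u = i := by
  simp [corona]

@[simp]
lemma corona_adj_inr_inl {u i : V} {a : W} :
    (corona G H).Adj (Sum.inr (i, a)) (Sum.inl u) ↔ u = i := by
  rw [adj_comm, corona_adj_inl_inr]

@[simp]
lemma corona_adj_inr_inr {i j : V} {a b : W} :
    (corona G H).Adj (Sum.inr (i, a)) (Sum.inr (j, b)) ↔ i = j ∧ H.Adj a b := by
  simpa [corona, H.adj_comm b a, eq_comm (a := j)] using fun _ h _ => h.ne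

/-- The isomorphism of corona products induced by isomorphisms of both factors. -/
def coronaCongr {V' W' : Type*} {G' : SimpleGraph V'} {H' : SimpleGraph W'}
    (e : G ≃g G') (f : H ≃g H') : corona G H ≃g corona G' H' where
  toEquiv := Equiv.sumCongr e.toEquiv (Equiv.prodCongr e.toEquiv f.toEquiv)
  map_rel_iff' := by
    rintro (u | ⟨i, a⟩) (v | ⟨j, b⟩) <;> simp [e.map_adj_iff, f.map_adj_iff]

lemma corona_connected (hG : G.Connected) : (corona G H).Connected := by
  obtain ⟨u⟩ := hG.nonempty
  have hinl (v : V) : (corona G H).Reachable (Sum.inl u) (Sum.inl v) :=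
    (hG.preconnected u v).map (⟨Sum.inl, corona_adj_inl_inl.2⟩ : G →g corona G H)
  refine (connected_iff_exists_forall_reachable _).2 ⟨Sum.inl u, ?_⟩
  rintro (v | ⟨i, a⟩)
  · exact hinl v
  · exact (hinl i).trans (corona_adj_inl_inr.2 rfl).reachable

lemma edist_corona_inl_add_one_le_length {i : V} {y : V ⊕ V × W}
    (hy : ∀ b, y ≠ Sum.inr (i, b)) {a : W} (p : (corona G H).Walk (Sum.inr (i, a)) y) :
    (corona G H).edist (Sum.inl i) y + 1 ≤ p.length := by
  generalize hx : Sum.inr (i, a) = x at p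
  induction p generalizing a with
  | nil => exact absurd hx.symm (hy a)
  | @cons x z y h p ih =>
    subst hx
    rw [Walk.length_cons, Nat.cast_add_one]
    rcases z with j | ⟨j, b⟩
    · obtain rfl := corona_adj_inr_inl.1 h
      gcongr
      exact edist_le p
    · obtain ⟨rfl, -⟩ := corona_adj_inr_inr.1 h
      exact (ih hy rfl).trans le_self_add

lemma edist_corona_inr_eq_edist_inl_add_one {i : V} {y : V ⊕ V × W}
    (hy : ∀ b, y ≠ Sum.inr (i, b)) (a : W) :
    (corona G H).edist (Sum.inr (i, a)) y = (corona G H).edist (Sum.inl i) y + 1 := by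
  refine le_antisymm ?_ (le_iInf (edist_corona_inl_add_one_le_length hy))
  have hadj : (corona G H).edist (Sum.inr (i, a)) (Sum.inl i) = 1 :=
    edist_eq_one_iff_adj.2 (corona_adj_inr_inl.2 rfl)
  rw [add_comm, ← hadj]
  exact SimpleGraph.edist_triangle

lemma dist_corona_inr_eq_of_notMem_copy {i : V} {y : V ⊕ V × W}
    (hy : ∀ c, y ≠ Sum.inr (i, c)) (a b : W) :
    (corona G H).dist (Sum.inr (i, a)) y = (corona G H).dist (Sum.inr (i, b)) y := by
  simp only [SimpleGraph.dist, edist_corona_inr_eq_edist_inl_add_one hy]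

lemma dist_corona_inr_inr_same_copy [DecidableEq W] [DecidableRel H.Adj] (i : V) (a b : W) :
    (corona G H).dist (Sum.inr (i, a)) (Sum.inr (i, b)) =
      if a = b then 0 else if H.Adj a b then 1 else 2 := by
  split_ifs with hab hadj
  · rw [hab, dist_self]
  · exact dist_eq_one_iff_adj.2 (corona_adj_inr_inr.2 ⟨rfl, hadj⟩)
  · have htwo : (corona G H).edist (Sum.inr (i, a)) (Sum.inr (i, b)) = 2 :=
      edist_eq_two_iff.2 ⟨by simpa using hab, by simpa using hadj,
        Sum.inl i, by simp [mem_commonNeighbors]⟩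
    rw [SimpleGraph.dist, htwo]
    rfl

end Corona

section AdjResolving

variable {W : Type*} {H : SimpleGraph W} {T : Set W}

/-- `T` is an adjacency resolving set for `H`: distinct vertices are separated by their distances
to the vertices of `T`, truncated at `2`. Since the truncated distance only records equality and
adjacency, the definition is phrased in terms of these two relations. -/
def IsAdjResolvingSet (H : SimpleGraph W) (T : Set W) : Prop :=
  ∀ a b : W, (∀ c ∈ T, (a = c ↔ b = c) ∧ (H.Adj a c ↔ H.Adj b c)) → a = b

lemma IsAdjResolvingSet.nonempty [Nontrivial W] (hT : IsAdjResolvingSet H T) : T.Nonempty := by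
  obtain ⟨a, b, hab⟩ := exists_pair_ne W
  rw [Set.nonempty_iff_ne_empty]
  rintro rfl
  exact hab (hT a b (by simp))

lemma IsAdjResolvingSet.eq_of_adj {a b c : W} (hc : IsAdjResolvingSet H {c})
    (ha : H.Adj a c) (hb : H.Adj b c) : a = b :=
  hc a b (by simp [ha, hb, ha.ne, hb.ne])

lemma IsAdjResolvingSet.eq_of_not_adj {a b c : W} (hc : IsAdjResolvingSet H {c})
    (hac : a ≠ c) (hbc : b ≠ c) (ha : ¬ H.Adj a c) (hb : ¬ H.Adj b c) : a = b :=
  hc a b (by simp [ha, hb, hac, hbc])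

lemma nonempty_iso_pathGraph_two {a b : W} (hab : H.Adj a b) (huniv : ∀ x, x = a ∨ x = b) :
    Nonempty (H ≃g pathGraph 2) := by
  have hbij : Function.Bijective ![a, b] := by
    refine ⟨fun i j h => ?_, fun x => ?_⟩
    · fin_cases i <;> fin_cases j <;> simp_all [hab.ne, hab.ne']
    · rcases huniv x with rfl | rfl
      exacts [⟨0, rfl⟩, ⟨1, rfl⟩]
  refine ⟨Iso.symm ⟨Equiv.ofBijective _ hbij, fun {i j} => ?_⟩⟩
  fin_cases i <;> fin_cases j <;> simp [pathGraph_adj, hab, hab.symm]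

lemma nonempty_iso_pathGraph_three {a b c : W} (hab : H.Adj a b) (hbc : H.Adj b c)
    (hne : a ≠ c) (hac : ¬ H.Adj a c) (huniv : ∀ x, x = a ∨ x = b ∨ x = c) :
    Nonempty (H ≃g pathGraph 3) := by
  have hca : ¬ H.Adj c a := fun h => hac h.symm
  have hbij : Function.Bijective ![a, b, c] := by
    refine ⟨fun i j h => ?_, fun x => ?_⟩
    · fin_cases i <;> fin_cases j <;> simp_all [hab.ne, hab.ne', hbc.ne, hbc.ne', hne.symm]
    · rcases huniv x with rfl | rfl | rfl
      exacts [⟨0, rfl⟩, ⟨1, rfl⟩, ⟨2, rfl⟩]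
  refine ⟨Iso.symm ⟨Equiv.ofBijective _ hbij, fun {i j} => ?_⟩⟩
  fin_cases i <;> fin_cases j <;>
    simp [pathGraph_adj, hab, hab.symm, hbc, hbc.symm, hac, hca]

lemma IsAdjResolvingSet.nonempty_iso_pathGraph [Nontrivial W] (hH : H.Connected) {c : W}
    (hc : IsAdjResolvingSet H {c}) :
    Nonempty (H ≃g pathGraph 2) ∨ Nonempty (H ≃g pathGraph 3) := by
  obtain ⟨a, hca⟩ := hH.preconnected.exists_adj_of_nontrivial c
  by_cases hfar : ∃ b, b ≠ c ∧ ¬ H.Adj b c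
  · right
    obtain ⟨b, hbc, hnbc⟩ := hfar
    have huniv (x : W) : x = c ∨ x = a ∨ x = b := by
      by_cases hx : x = c
      · exact Or.inl hx
      by_cases hxc : H.Adj x c
      · exact Or.inr (Or.inl (hc.eq_of_adj hxc hca.symm))
      · exact Or.inr (Or.inr (hc.eq_of_not_adj hx hbc hxc hnbc))
    have hab : H.Adj a b := by
      obtain ⟨x, hbx⟩ := hH.preconnected.exists_adj_of_nontrivial b
      rcases huniv x with rfl | rfl | rfl
      · exact absurd hbx hnbc
      · exact hbx.symm
      · exact absurd hbx H.irrefl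
    exact nonempty_iso_pathGraph_three hca hab hbc.symm (fun h => hnbc h.symm) huniv
  · left
    push Not at hfar
    refine nonempty_iso_pathGraph_two hca fun x => or_iff_not_imp_left.2 fun hx => ?_
    exact hc.eq_of_adj (hfar x hx) hca.symm

lemma IsAdjResolvingSet.two_le_ncard [Finite W] [Nontrivial W] (hH : H.Connected)
    (h2 : ¬ Nonempty (H ≃g pathGraph 2)) (h3 : ¬ Nonempty (H ≃g pathGraph 3))
    (hT : IsAdjResolvingSet H T) : 2 ≤ T.ncard := by
  have hpos : 0 < T.ncard := (Set.ncard_pos T.toFinite).2 hT.nonempty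
  have hne_one : T.ncard ≠ 1 := by
    intro hone
    obtain ⟨c, rfl⟩ := Set.ncard_eq_one.1 hone
    exact (hT.nonempty_iso_pathGraph hH).elim h2 h3
  omega

end AdjResolving

section MetricDim

variable {V W : Type*} {G : SimpleGraph V} {H : SimpleGraph W}

lemma le_metricDim (hG : G.Connected) {k : ℕ}
    (h : ∀ S : Set V, IsResolvingSet G S → k ≤ S.ncard) : k ≤ metricDim G := by
  have huniv : IsResolvingSet G Set.univ := fun u v huv =>
    hG.dist_eq_zero_iff.1 ((huv v (Set.mem_univ v)).trans dist_self)
  refine le_csInf ⟨_, Set.univ, huniv, rfl⟩ ?_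
  rintro _ ⟨S, hS, rfl⟩
  exact h S hS

/-- The part of a vertex set `S` of `G ⊙ H` that lies in the `i`-th copy of `H`, as a set of
vertices of `H`. -/
def copyTrace (S : Set (V ⊕ V × W)) (i : V) : Set W :=
  {a | Sum.inr (i, a) ∈ S}

lemma sum_ncard_copyTrace_le [Fintype V] {S : Set (V ⊕ V × W)} (hS : S.Finite) :
    ∑ i, (copyTrace S i).ncard ≤ S.ncard := by
  have : Finite S := hS
  have (i : V) : Finite (copyTrace S i) :=
    hS.preimage (Sum.inr_injective.comp (Prod.mk_right_injective i)).injOn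
  calc ∑ i, (copyTrace S i).ncard = Nat.card (Σ i, copyTrace S i) := Nat.card_sigma.symm
    _ ≤ Nat.card S := by
      refine Nat.card_le_card_of_injective (fun x => ⟨Sum.inr (x.1, x.2), x.2.2⟩) ?_
      rintro ⟨i, a, ha⟩ ⟨j, b, hb⟩ h
      obtain ⟨rfl, rfl⟩ : i = j ∧ a = b := by simpa using congrArg Subtype.val h
      rfl

lemma IsResolvingSet.isAdjResolvingSet_copyTrace {S : Set (V ⊕ V × W)}
    (hS : IsResolvingSet (corona G H) S) (i : V) : IsAdjResolvingSet H (copyTrace S i) := by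
  classical
  intro a b hab
  suffices Sum.inr (i, a) = (Sum.inr (i, b) : V ⊕ V × W) by simpa using this
  refine hS _ _ fun y hy => ?_
  by_cases hcopy : ∃ c, y = Sum.inr (i, c)
  · obtain ⟨c, rfl⟩ := hcopy
    simp only [dist_corona_inr_inr_same_copy, hab c hy]
  · exact dist_corona_inr_eq_of_notMem_copy (not_exists.1 hcopy) a b

lemma card_mul_le_metricDim_corona [Fintype V] [Finite W] (hG : G.Connected) {k : ℕ}
    (hk : ∀ T, IsAdjResolvingSet H T → k ≤ T.ncard) :
    Fintype.card V * k ≤ metricDim (corona G H) := by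
  refine le_metricDim (corona_connected hG) fun S hS => ?_
  calc Fintype.card V * k ≤ ∑ i, (copyTrace S i).ncard :=
        Finset.card_nsmul_le_sum _ _ _ fun i _ => hk _ (hS.isAdjResolvingSet_copyTrace i)
    _ ≤ S.ncard := sum_ncard_copyTrace_le S.toFinite

lemma card_le_metricDim_corona [Fintype V] [Finite W] [Nontrivial W] (hG : G.Connected) :
    Fintype.card V ≤ metricDim (corona G H) := by
  simpa using card_mul_le_metricDim_corona (H := H) (k := 1) hG
    fun T hT => (Set.ncard_pos T.toFinite).2 hT.nonempty

lemma card_mul_two_le_metricDim_corona [Fintype V] [Finite W] [Nontrivial W]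
    (hG : G.Connected) (hH : H.Connected)
    (h2 : ¬ Nonempty (H ≃g pathGraph 2)) (h3 : ¬ Nonempty (H ≃g pathGraph 3)) :
    Fintype.card V * 2 ≤ metricDim (corona G H) :=
  card_mul_le_metricDim_corona hG fun _ hT => hT.two_le_ncard hH h2 h3

end MetricDim

section PartitionDim

variable {V : Type*} {G : SimpleGraph V}

lemma setDist_singleton (v w : V) : setDist G v {w} = G.dist v w := by
  simp [setDist]

lemma setDist_eq_zero_iff_mem (hG : G.Connected) {v : V} {A : Set V} (hA : A.Nonempty) :
    setDist G v A = 0 ↔ v ∈ A := by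
  simp [setDist, Nat.sInf_eq_zero, hG.dist_eq_zero_iff, hA.ne_empty]

lemma isResolvingPartition_range_preimage_singleton {ι : Type*} (hG : G.Connected)
    {f : V → ι} (hf : f.Surjective)
    (hres : ∀ u v, f u = f v →
      (∀ z, setDist G u (f ⁻¹' {z}) = setDist G v (f ⁻¹' {z})) → u = v) :
    IsResolvingPartition G (Set.range fun z => f ⁻¹' {z}) := by
  have hne (z : ι) : (f ⁻¹' {z}).Nonempty := (Set.singleton_nonempty z).preimage hf
  refine ⟨?_, fun v => ⟨f ⁻¹' {f v}, ⟨⟨f v, rfl⟩, rfl⟩, ?_⟩, fun u v huv => ?_⟩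
  · rintro _ ⟨z, rfl⟩
    exact hne z
  · rintro _ ⟨⟨z, rfl⟩, rfl⟩
    rfl
  · have hdist (z : ι) : setDist G u (f ⁻¹' {z}) = setDist G v (f ⁻¹' {z}) := huv _ ⟨z, rfl⟩
    have hcell : u ∈ f ⁻¹' {f v} := by
      rw [← setDist_eq_zero_iff_mem hG (hne _), hdist, setDist_eq_zero_iff_mem hG (hne _)]
      rfl
    exact hres u v hcell hdist

lemma partitionDim_le_card_of_surjective {ι : Type*} [Fintype ι] (hG : G.Connected) {f : V → ι}
    (hf : f.Surjective)
    (hres : ∀ u v, f u = f v →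
      (∀ z, setDist G u (f ⁻¹' {z}) = setDist G v (f ⁻¹' {z})) → u = v) :
    partitionDim G ≤ Fintype.card ι :=
  calc partitionDim G ≤ (Set.range fun z => f ⁻¹' {z}).ncard :=
        Nat.sInf_le ⟨_, isResolvingPartition_range_preimage_singleton hG hf hres, rfl⟩
    _ ≤ Fintype.card ι := by
        rw [← Nat.card_eq_fintype_card, ← Nat.card_coe_set_eq]
        exact Finite.card_range_le _

lemma partitionDim_le_card [Fintype V] (hG : G.Connected) :
    partitionDim G ≤ Fintype.card V :=
  partitionDim_le_card_of_surjective hG Function.surjective_id fun _ _ huv _ => huv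

lemma partitionDim_lt_card_of_dist_ne [Fintype V] (hG : G.Connected) {u v w : V}
    (huv : u ≠ v) (hwu : w ≠ u) (hwv : w ≠ v) (hdist : G.dist u w ≠ G.dist v w) :
    partitionDim G < Fintype.card V := by
  classical
  let merge (x : V) : {x // x ≠ u} := if h : x = u then ⟨v, huv.symm⟩ else ⟨x, h⟩
  have hsurj : merge.Surjective := fun x => ⟨x, dif_neg x.2⟩
  have hfiber : merge ⁻¹' {⟨w, hwu⟩} = {w} := by
    ext x
    grind
  have hres (x y : V) (hxy : merge x = merge y)
      (h : ∀ z, setDist G x (merge ⁻¹' {z}) = setDist G y (merge ⁻¹' {z})) : x = y := by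
    have hw : G.dist x w = G.dist y w := by
      simpa only [hfiber, setDist_singleton] using h ⟨w, hwu⟩
    have hpair : x = y ∨ (x = u ∧ y = v) ∨ (x = v ∧ y = u) := by grind
    rcases hpair with rfl | ⟨rfl, rfl⟩ | ⟨rfl, rfl⟩
    · rfl
    · exact absurd hw hdist
    · exact absurd hw.symm hdist
  calc partitionDim G ≤ Fintype.card {x // x ≠ u} :=
        partitionDim_le_card_of_surjective hG hsurj hres
    _ < Fintype.card V := Fintype.card_subtype_lt (x := u) (by simp)

lemma exists_induced_path_of_ne_top (hG : G.Connected) (hne : G ≠ ⊤) :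
    ∃ u v w, G.Adj u v ∧ G.Adj v w ∧ ¬ G.Adj u w ∧ u ≠ w := by
  obtain ⟨x, y, hxy, hnadj⟩ := ne_top_iff_exists_not_adj.1 hne
  obtain ⟨p, hp⟩ := hG.exists_walk_length_eq_dist x y
  exact p.exists_adj_adj_not_adj_ne hp (hG.one_lt_dist_of_ne_of_not_adj hxy hnadj)

lemma partitionDim_lt_card_of_ne_top [Fintype V] (hG : G.Connected) (hne : G ≠ ⊤) :
    partitionDim G < Fintype.card V := by
  obtain ⟨u, v, w, huv, hvw, hnuw, huw⟩ := exists_induced_path_of_ne_top hG hne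
  refine partitionDim_lt_card_of_dist_ne hG huv.ne huw.symm hvw.ne' ?_
  rw [dist_eq_one_iff_adj.2 hvw]
  exact mt dist_eq_one_iff_adj.1 hnuw

end PartitionDim

/-- If `G` and `H` are connected graphs of order at least two, `G` of order `n₁`,
and `G⊙H` is isomorphic neither to `K_{n₁}⊙P₂` nor to `K_{n₁}⊙P₃`, then
`dim(G⊙H) ≥ (n₁/(n₁-1))·pd(G)`. -/
theorem stmt1 {V W : Type*} [Fintype V] [Fintype W] (G : SimpleGraph V) (H : SimpleGraph W)
    (n₁ : ℕ) (hn₁ : Fintype.card V = n₁) (h₁ : 2 ≤ n₁) (h₂ : 2 ≤ Fintype.card W)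
    (hG : G.Connected) (hH : H.Connected)
    (hni2 : ¬ Nonempty (corona G H ≃g corona (⊤ : SimpleGraph (Fin n₁)) (pathGraph 2)))
    (hni3 : ¬ Nonempty (corona G H ≃g corona (⊤ : SimpleGraph (Fin n₁)) (pathGraph 3))) :
    (metricDim (corona G H) : ℝ) ≥ ((n₁ : ℝ) / ((n₁ : ℝ) - 1)) * partitionDim G := by
  subst hn₁
  have : Nontrivial W := Fintype.one_lt_card_iff_nontrivial.1 h₂
  have hn : (2 : ℝ) ≤ Fintype.card V := by exact_mod_cast h₁
  rw [ge_iff_le, div_mul_eq_mul_div, div_le_iff₀ (by linarith)]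
  by_cases hK : G = ⊤
  · have e : G ≃g (⊤ : SimpleGraph (Fin (Fintype.card V))) :=
      hK ▸ Iso.completeGraph (Fintype.equivFin V)
    have hpd : (partitionDim G : ℝ) ≤ Fintype.card V := by
      exact_mod_cast partitionDim_le_card hG
    have hdim : (Fintype.card V : ℝ) * 2 ≤ metricDim (corona G H) := by
      exact_mod_cast card_mul_two_le_metricDim_corona hG hH
        (fun ⟨f⟩ => hni2 ⟨coronaCongr e f⟩) (fun ⟨f⟩ => hni3 ⟨coronaCongr e f⟩)
    calc (Fintype.card V : ℝ) * partitionDim G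
        ≤ Fintype.card V * 2 * (Fintype.card V - 1) := by nlinarith
      _ ≤ metricDim (corona G H) * (Fintype.card V - 1) := by gcongr; linarith
  · have hpd : (partitionDim G : ℝ) ≤ Fintype.card V - 1 :=
      le_sub_iff_add_le.2 (by exact_mod_cast partitionDim_lt_card_of_ne_top hG hK)
    have hdim : (Fintype.card V : ℝ) ≤ metricDim (corona G H) := by
      exact_mod_cast card_le_metricDim_corona (H := H) hG
    gcongr
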